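/- Suppose θ is ergodic and A : Ω → M_{k×k}({0,1}) is a random transition matrix. Then there is a constant h(Σ_A) ∈ ℝ ∪ {−∞} such that for ℙ-almost every ω the limit lim_{n→∞}(1/n) log |𝓒_n(ω)| exists and equals h(Σ_A) (the topological entropy of the random shift of finite type Σ_A). -/

import Mathlib

/-!
The map `ω ↦ log |𝓒_n(ω)|` is a nonnegative measurable subadditive process over `θ`, bounded by
`n log k`: splitting a word gives `|𝓒_{n+m}(ω)| ≤ |𝓒_n(ω)| |𝓒_m(θⁿω)|`. Since `Real.log 0 = 0`, the
logarithms stay nonnegative and subadditive even where there are no cylinders at all; there the limit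
is `0`. The result is therefore Kingman's subadditive ergodic theorem for processes
`0 ≤ g_n ≤ n M`, which is proved here from scratch, by the Katznelson–Weiss covering argument.

* By subadditivity `liminf g_n / n` does not decrease along `θ`, so it is almost surely a constant
  `c` (`BddSubadd.exists_liminf_const`).
* Let `a > c` and let `B` be the set of points at which no `1 ≤ m ≤ N` satisfies `g_m ≤ m a`. For
  large `N` the set `B` has small measure, and cutting the orbit segment of length `n` greedily into
  pieces gives `g_n ≤ n a + M ∑_{i<n} 1_B(θ^i ω) + N M` (`BddSubadd.covering`).
* Applied to the additive process of visits to `Bᶜ` and integrated, this inequality shows that the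
  visit frequency to a set `B` is asymptotically at most `ℙ B` (`eventually_visits_le`), which is
  the half of Birkhoff's theorem that is needed.
* Inserting this in the covering inequality for `g` gives `limsup g_n / n ≤ c`
  (`BddSubadd.exists_tendsto`).
-/

open MeasureTheory Filter Topology

/-- The matrix cocycle: `matIter θ A n ω = A(ω)A(θω)⋯A(θ^{n-1}ω)` (with `matIter θ A 0 ω = 1`). -/
noncomputable def matIter {Ω : Type*} {k : ℕ} (θ : Ω → Ω)
    (A : Ω → Matrix (Fin k) (Fin k) ℝ) : ℕ → Ω → Matrix (Fin k) (Fin k) ℝ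
  | 0, _ => 1
  | n + 1, ω => A ω * matIter θ A n (θ ω)

/-- The number of `n`-cylinders:
`|𝓒_n(ω)| = #{(x₀,…,x_{n-1}) : A_{x_i x_{i+1}}(θ^i ω) = 1 for 0 ≤ i ≤ n-2}`. -/
noncomputable def cylCount {Ω : Type*} {k : ℕ} (θ : Ω → Ω)
    (A : Ω → Matrix (Fin k) (Fin k) ℝ) (n : ℕ) (ω : Ω) : ℕ :=
  Set.ncard {x : Fin n → Fin k |
    ∀ (i : ℕ) (hi : i + 1 < n),
      A (θ^[i] ω) (x ⟨i, Nat.lt_of_succ_lt hi⟩) (x ⟨i + 1, hi⟩) = 1}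

/-! ### Bounded subadditive processes -/

/-- A measurable subadditive process over `θ` satisfying `0 ≤ g n ≤ n M` pointwise. -/
structure BddSubadd {Ω : Type*} [MeasurableSpace Ω] (θ : Ω → Ω) (g : ℕ → Ω → ℝ) (M : ℝ) :
    Prop where
  meas : ∀ n, Measurable (g n)
  nonneg : ∀ n ω, 0 ≤ g n ω
  le : ∀ n ω, g n ω ≤ n * M
  subadd : ∀ n m ω, g (n + m) ω ≤ g n ω + g m (θ^[n] ω)
  M_nonneg : 0 ≤ M

namespace BddSubadd

variable {Ω : Type*} [MeasurableSpace Ω] {θ : Ω → Ω} {g : ℕ → Ω → ℝ} {M : ℝ}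

lemma div_nonneg' (h : BddSubadd θ g M) (n : ℕ) (ω : Ω) : 0 ≤ g n ω / n :=
  div_nonneg (h.nonneg n ω) (Nat.cast_nonneg n)

lemma div_le (h : BddSubadd θ g M) (n : ℕ) (ω : Ω) : g n ω / n ≤ M := by
  rcases Nat.eq_zero_or_pos n with rfl | hn
  · simpa using h.M_nonneg
  · have : (0 : ℝ) < n := by exact_mod_cast hn
    rw [div_le_iff₀ this]
    linarith [h.le n ω]

lemma bddBelow (h : BddSubadd θ g M) (ω : Ω) :
    IsBoundedUnder (· ≥ ·) atTop (fun n : ℕ => g n ω / n) :=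
  isBoundedUnder_of ⟨0, fun n => h.div_nonneg' n ω⟩

lemma bddAbove (h : BddSubadd θ g M) (ω : Ω) :
    IsBoundedUnder (· ≤ ·) atTop (fun n : ℕ => g n ω / n) :=
  isBoundedUnder_of ⟨M, fun n => h.div_le n ω⟩

lemma liminf_nonneg (h : BddSubadd θ g M) (ω : Ω) :
    0 ≤ liminf (fun n : ℕ => g n ω / n) atTop :=
  le_liminf_of_le (h.bddAbove ω).isCoboundedUnder_ge
    (Eventually.of_forall fun n => h.div_nonneg' n ω)

lemma liminf_le (h : BddSubadd θ g M) (ω : Ω) :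
    liminf (fun n : ℕ => g n ω / n) atTop ≤ M :=
  liminf_le_of_frequently_le (Eventually.of_forall fun n => h.div_le n ω).frequently
    (h.bddBelow ω)

/-- The lower growth rate does not decrease along the orbit, since
`g (n + 1) ω ≤ M + g n (θ ω)`. -/
lemma liminf_le_comp (h : BddSubadd θ g M) (ω : Ω) :
    liminf (fun n : ℕ => g n ω / n) atTop ≤ liminf (fun n : ℕ => g n (θ ω) / n) atTop := by
  refine le_of_forall_lt fun b hb => ?_
  obtain ⟨b', hbb', hb'⟩ := exists_between hb
  obtain ⟨b'', hbb'', hb''⟩ := exists_between hbb'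
  refine lt_of_lt_of_le hbb'' ?_
  refine le_liminf_of_le (h.bddAbove _).isCoboundedUnder_ge ?_
  have h1 := eventually_lt_of_lt_liminf hb' (h.bddBelow ω)
  have h2 := (tendsto_add_atTop_nat 1).eventually h1
  have h3 : ∀ᶠ n : ℕ in atTop, M / n < b' - b'' :=
    (tendsto_const_div_atTop_nhds_zero_nat M).eventually (gt_mem_nhds (by linarith))
  filter_upwards [h2, h3, eventually_gt_atTop 0] with n h2 h3 hn
  have hn' : (0 : ℝ) < n := by exact_mod_cast hn
  have hs := h.subadd 1 n ω
  have hl := h.le 1 ω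
  rw [add_comm 1 n] at hs
  simp only [Function.iterate_one, Nat.cast_one, one_mul] at hs hl
  have h4 : g (n + 1) ω / ((n + 1 : ℕ) : ℝ) ≤ g (n + 1) ω / n := by
    apply div_le_div_of_nonneg_left (h.nonneg _ _) hn'
    push_cast; linarith
  have h5 : g (n + 1) ω / n ≤ M / n + g n (θ ω) / n := by
    rw [← add_div]
    gcongr
    linarith
  linarith

/-- A function that does not decrease along a measure-preserving map is almost surely invariant,
as both sides have the same integral; by ergodicity the lower growth rate is constant. -/
lemma exists_liminf_const (h : BddSubadd θ g M) {ℙ : Measure Ω} [IsProbabilityMeasure ℙ]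
    (hθ : Ergodic θ ℙ) :
    ∃ c : ℝ, ∀ᵐ ω ∂ℙ, liminf (fun n : ℕ => g n ω / n) atTop = c := by
  set f : Ω → ℝ := fun ω => liminf (fun n : ℕ => g n ω / n) atTop with hf
  have hfm : Measurable f := Measurable.liminf fun n => (h.meas n).div_const _
  have hfi : Integrable f ℙ := by
    refine Integrable.of_bound hfm.aestronglyMeasurable M (Eventually.of_forall fun ω => ?_)
    rw [Real.norm_of_nonneg (h.liminf_nonneg ω)]
    exact h.liminf_le ω
  have hfi' : Integrable (f ∘ θ) ℙ := hθ.toMeasurePreserving.integrable_comp_of_integrable hfi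
  have hint : ∫ ω, f ω ∂ℙ = ∫ ω, (f ∘ θ) ω ∂ℙ := by
    conv_lhs => rw [← hθ.toMeasurePreserving.map_eq]
    exact integral_map hθ.measurable.aemeasurable hfm.aestronglyMeasurable
  have heq : f =ᵐ[ℙ] f ∘ θ :=
    (integral_eq_iff_of_ae_le hfi hfi' (Eventually.of_forall h.liminf_le_comp)).1 hint
  obtain ⟨c, hc⟩ := hθ.ae_eq_const_of_ae_eq_comp_ae hfm.aestronglyMeasurable heq.symm
  exact ⟨c, hc⟩

/-- Covering inequality. If almost every point has some `m ≥ 1` with `g m ≤ m a`, then, outside a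
set `B` of small measure, such an `m` can be found below a common bound `N`. Splitting an orbit
segment greedily, with steps of length one (and cost at most `M`) from the points of `B`, costs `a`
per unit of time, plus `M` per visit to `B`, plus at most `N M` for the last piece. -/
lemma covering (h : BddSubadd θ g M) {ℙ : Measure Ω} [IsProbabilityMeasure ℙ] {a : ℝ}
    (ha : ∀ᵐ ω ∂ℙ, ∃ m : ℕ, 1 ≤ m ∧ g m ω ≤ m * a) (ha0 : 0 ≤ a) {δ : ℝ} (hδ : 0 < δ) :
    ∃ (N : ℕ) (B : Set Ω), MeasurableSet B ∧ ℙ.real B < δ ∧ ∀ n ω,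
      g n ω ≤ n * a + M * birkhoffSum θ (B.indicator 1) n ω + N * M := by
  let B : ℕ → Set Ω := fun N => {ω | ∀ m : ℕ, 1 ≤ m → m ≤ N → m * a < g m ω}
  have hBm : ∀ N, MeasurableSet (B N) := fun N => by
    have : B N = ⋂ m : ℕ, ⋂ _ : 1 ≤ m, ⋂ _ : m ≤ N, {ω | m * a < g m ω} := by
      ext ω; simp [B]
    rw [this]
    exact MeasurableSet.iInter fun m => MeasurableSet.iInter fun _ => MeasurableSet.iInter fun _ =>
      measurableSet_lt measurable_const (h.meas m)
  have hanti : Antitone B := fun N N' hN ω hω m h1 h2 => hω m h1 (h2.trans hN)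
  have hnull : ℙ (⋂ N, B N) = 0 := by
    refine measure_mono_null (t := {ω | ¬ ∃ m : ℕ, 1 ≤ m ∧ g m ω ≤ m * a}) ?_ ha
    rintro ω hω ⟨m, h1, h2⟩
    exact absurd (Set.mem_iInter.1 hω m m h1 le_rfl) (not_lt.2 h2)
  have htend := tendsto_measure_iInter_atTop (μ := ℙ) (s := B)
    (fun N => (hBm N).nullMeasurableSet) hanti ⟨0, measure_ne_top _ _⟩
  rw [hnull] at htend
  obtain ⟨N, hN⟩ := (htend.eventually (gt_mem_nhds (ENNReal.ofReal_pos.2 hδ))).exists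
  refine ⟨N, B N, hBm N, ?_, ?_⟩
  · rw [measureReal_def]
    exact (ENNReal.lt_ofReal_iff_toReal_lt (measure_ne_top _ _)).1 hN
  have hS : ∀ n ω, 0 ≤ birkhoffSum θ ((B N).indicator (1 : Ω → ℝ)) n ω := fun n ω =>
    Finset.sum_nonneg fun i _ => Set.indicator_nonneg (fun _ _ => zero_le_one) _
  have hM := h.M_nonneg
  intro n
  induction n using Nat.strong_induction_on with
  | _ n ih =>
  intro ω
  have hMS := mul_nonneg hM (hS n ω)
  rcases le_or_gt n N with hnN | hnN
  · have h1 : (n : ℝ) * M ≤ N * M := by gcongr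
    have h2 : 0 ≤ (n : ℝ) * a := by positivity
    linarith [h.le n ω]
  by_cases hω : ω ∈ B N
  · obtain ⟨n, rfl⟩ : ∃ n', n = 1 + n' := ⟨n - 1, by omega⟩
    have h1 := ih n (by omega) (θ ω)
    have h2 := h.subadd 1 n ω
    have h3 := h.le 1 ω
    rw [birkhoffSum_add, birkhoffSum_one, Set.indicator_of_mem hω]
    simp only [Function.iterate_one, Nat.cast_one, one_mul, Nat.cast_add, Pi.one_apply] at h2 h3 ⊢
    nlinarith
  · simp only [B, Set.mem_ofPred_eq, not_forall, not_lt] at hω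
    obtain ⟨m, hm1, hmN, hm⟩ := hω
    obtain ⟨n, rfl⟩ : ∃ n', n = m + n' := ⟨n - m, by omega⟩
    have h1 := ih n (by omega) (θ^[m] ω)
    have h2 := h.subadd m n ω
    have h3 := mul_nonneg hM (hS m ω)
    rw [birkhoffSum_add]
    push_cast
    nlinarith

/-- If the lower growth rate is almost surely `c`, then any `a > c` satisfies the hypothesis of
`BddSubadd.covering`. -/
lemma ae_exists_le (h : BddSubadd θ g M) {ℙ : Measure Ω} {c a : ℝ}
    (hc : ∀ᵐ ω ∂ℙ, liminf (fun n : ℕ => g n ω / n) atTop = c) (ha : c < a) :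
    ∀ᵐ ω ∂ℙ, ∃ m : ℕ, 1 ≤ m ∧ g m ω ≤ m * a := by
  filter_upwards [hc] with ω hω
  have h1 := frequently_lt_of_liminf_lt (h.bddAbove ω).isCoboundedUnder_ge (hω.trans_lt ha)
  obtain ⟨m, hm, hm1⟩ := (h1.and_eventually (eventually_ge_atTop 1)).exists
  refine ⟨m, hm1, ?_⟩
  have : (0 : ℝ) < m := by exact_mod_cast hm1
  rw [div_lt_iff₀ this] at hm
  linarith

end BddSubadd

/-! ### Visit frequencies -/

section Visits

variable {Ω : Type*} [MeasurableSpace Ω] {θ : Ω → Ω}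

lemma bddSubadd_visits (hθ : Measurable θ) {B : Set Ω} (hB : MeasurableSet B) :
    BddSubadd θ (fun n => birkhoffSum θ (B.indicator (1 : Ω → ℝ)) n) 1 where
  meas n := by
    unfold birkhoffSum
    exact Finset.measurable_sum _ fun i _ =>
      (measurable_one.indicator hB).comp (hθ.iterate i)
  nonneg n ω := Finset.sum_nonneg fun i _ => Set.indicator_nonneg (fun _ _ => zero_le_one) _
  le n ω := by
    have : ∀ i ∈ Finset.range n, B.indicator (1 : Ω → ℝ) (θ^[i] ω) ≤ 1 := fun i _ =>
      Set.indicator_le' (fun _ _ => le_rfl) (fun _ _ => zero_le_one) _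
    simpa [birkhoffSum] using Finset.sum_le_sum this
  subadd n m ω := (birkhoffSum_add _ _ _ _ _).le
  M_nonneg := zero_le_one

variable {ℙ : Measure Ω} [IsProbabilityMeasure ℙ]

lemma integrable_visits (hθ : Measurable θ) {B : Set Ω} (hB : MeasurableSet B) (n : ℕ) :
    Integrable (fun ω => birkhoffSum θ (B.indicator (1 : Ω → ℝ)) n ω) ℙ := by
  have h := bddSubadd_visits hθ hB
  refine Integrable.of_bound (h.meas n).aestronglyMeasurable (n * 1)
    (Eventually.of_forall fun ω => ?_)
  rw [Real.norm_of_nonneg (h.nonneg n ω)]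
  exact h.le n ω

lemma integral_visits (hθ : MeasurePreserving θ ℙ ℙ) {B : Set Ω} (hB : MeasurableSet B) (n : ℕ) :
    ∫ ω, birkhoffSum θ (B.indicator (1 : Ω → ℝ)) n ω ∂ℙ = n * ℙ.real B := by
  have hint : Integrable (B.indicator (1 : Ω → ℝ)) ℙ := (integrable_const 1).indicator hB
  unfold birkhoffSum
  rw [integral_finsetSum]
  · have : ∀ i ∈ Finset.range n, ∫ ω, B.indicator (1 : Ω → ℝ) (θ^[i] ω) ∂ℙ = ℙ.real B := by
      intro i _
      have hi := hθ.iterate i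
      rw [← integral_map (f := B.indicator (1 : Ω → ℝ)) hi.measurable.aemeasurable
        (measurable_one.indicator hB).aestronglyMeasurable, hi.map_eq, integral_indicator_one hB]
    rw [Finset.sum_congr rfl this]
    simp
  · intro i _
    exact (hθ.iterate i).integrable_comp_of_integrable hint

/-- If almost every point has a time `m ≥ 1` up to which the visit frequency to `B` is at most `a`,
then `ℙ B ≤ a`: integrate the covering inequality, divide by `n` and let `n → ∞`. -/
lemma measure_le_of_visits (hθ : MeasurePreserving θ ℙ ℙ) {B : Set Ω} (hB : MeasurableSet B)
    {a : ℝ} (ha0 : 0 ≤ a)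
    (ha : ∀ᵐ ω ∂ℙ, ∃ m : ℕ, 1 ≤ m ∧ birkhoffSum θ (B.indicator (1 : Ω → ℝ)) m ω ≤ m * a) :
    ℙ.real B ≤ a := by
  refine le_of_forall_pos_le_add fun δ hδ => ?_
  obtain ⟨N, D, hD, hDδ, hcov⟩ := (bddSubadd_visits hθ.measurable hB).covering ha ha0 hδ
  have key : ∀ n : ℕ, (n : ℝ) * ℙ.real B ≤ n * a + n * δ + N := by
    intro n
    have h1 : ∫ ω, birkhoffSum θ (B.indicator (1 : Ω → ℝ)) n ω ∂ℙ ≤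
        ∫ ω, (birkhoffSum θ (D.indicator (1 : Ω → ℝ)) n ω + (n * a + N)) ∂ℙ := by
      refine integral_mono (integrable_visits hθ.measurable hB n)
        ((integrable_visits hθ.measurable hD n).add (integrable_const _)) fun ω => ?_
      have := hcov n ω
      dsimp only
      linarith
    rw [integral_add (integrable_visits hθ.measurable hD n) (integrable_const _),
      integral_visits hθ hB, integral_visits hθ hD] at h1
    simp only [integral_const, probReal_univ, one_smul] at h1
    have : (n : ℝ) * ℙ.real D ≤ n * δ := by gcongr
    linarith
  by_contra! hlt
  obtain ⟨n, hn⟩ := exists_nat_gt ((N : ℝ) / (ℙ.real B - (a + δ)))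
  rw [div_lt_iff₀ (by linarith)] at hn
  nlinarith [key n]

/-- The upper half of Birkhoff's theorem for an indicator function: the visit frequency to `B` is
eventually at most any `b > ℙ B`. It is obtained from lower bounds on the visits to `Bᶜ`. -/
lemma eventually_visits_le (hθ : Ergodic θ ℙ) {B : Set Ω} (hB : MeasurableSet B) {b : ℝ}
    (hb : ℙ.real B < b) :
    ∀ᵐ ω ∂ℙ, ∀ᶠ n : ℕ in atTop, birkhoffSum θ (B.indicator (1 : Ω → ℝ)) n ω ≤ n * b := by
  have hp := bddSubadd_visits hθ.measurable hB.compl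
  obtain ⟨c, hc⟩ := hp.exists_liminf_const hθ
  have hc0 : 0 ≤ c := by
    obtain ⟨ω, hω⟩ := hc.exists
    exact hω ▸ hp.liminf_nonneg ω
  have h1 : ℙ.real Bᶜ ≤ c := by
    refine le_of_forall_pos_le_add fun ε hε => ?_
    exact measure_le_of_visits hθ.toMeasurePreserving hB.compl (by linarith)
      (hp.ae_exists_le hc (by linarith))
  rw [probReal_compl_eq_one_sub hB] at h1
  filter_upwards [hc] with ω hω
  have h2 : 1 - b <
      liminf (fun n : ℕ => birkhoffSum θ (Bᶜ.indicator (1 : Ω → ℝ)) n ω / n) atTop := by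
    rw [hω]; linarith
  filter_upwards [eventually_lt_of_lt_liminf h2 (hp.bddBelow ω), eventually_gt_atTop 0] with n hn hn0
  have hn' : (0 : ℝ) < n := by exact_mod_cast hn0
  rw [lt_div_iff₀ hn'] at hn
  have hsum : birkhoffSum θ (B.indicator (1 : Ω → ℝ)) n ω +
      birkhoffSum θ (Bᶜ.indicator (1 : Ω → ℝ)) n ω = n := by
    unfold birkhoffSum
    rw [← Finset.sum_add_distrib]
    have : ∀ i ∈ Finset.range n, B.indicator (1 : Ω → ℝ) (θ^[i] ω) +
        Bᶜ.indicator (1 : Ω → ℝ) (θ^[i] ω) = 1 := fun i _ =>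
      Set.indicator_self_add_compl_apply B (1 : Ω → ℝ) _
    rw [Finset.sum_congr rfl this]
    simp
  linarith

end Visits

/-! ### Kingman's theorem for bounded processes -/

/-- Kingman's theorem for processes with `0 ≤ g n ≤ n M` over an ergodic map. -/
lemma BddSubadd.exists_tendsto {Ω : Type*} [MeasurableSpace Ω] {θ : Ω → Ω} {g : ℕ → Ω → ℝ} {M : ℝ}
    (h : BddSubadd θ g M) {ℙ : Measure Ω} [IsProbabilityMeasure ℙ] (hθ : Ergodic θ ℙ) :
    ∃ c : ℝ, ∀ᵐ ω ∂ℙ, Tendsto (fun n : ℕ => g n ω / n) atTop (𝓝 c) := by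
  obtain ⟨c, hc⟩ := h.exists_liminf_const hθ
  refine ⟨c, ?_⟩
  have hc0 : 0 ≤ c := by
    obtain ⟨ω, hω⟩ := hc.exists
    exact hω ▸ h.liminf_nonneg ω
  have hM := h.M_nonneg
  have key : ∀ ε : ℝ, 0 < ε → ∀ᵐ ω ∂ℙ, ∀ᶠ n : ℕ in atTop, g n ω / n ≤ c + (2 + M) * ε := by
    intro ε hε
    obtain ⟨N, B, hB, hBε, hcov⟩ := h.covering
      (h.ae_exists_le hc (by linarith : c < c + ε)) (by linarith) hε
    filter_upwards [eventually_visits_le hθ hB hBε] with ω hω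
    have h3 : ∀ᶠ n : ℕ in atTop, (N * M) / n < ε :=
      (tendsto_const_div_atTop_nhds_zero_nat (N * M)).eventually (gt_mem_nhds hε)
    filter_upwards [hω, h3, eventually_gt_atTop 0] with n h1 h3 hn
    have hn' : (0 : ℝ) < n := by exact_mod_cast hn
    rw [div_lt_iff₀ hn'] at h3
    rw [div_le_iff₀ hn']
    have := mul_le_mul_of_nonneg_left h1 hM
    linarith [hcov n ω]
  have hall : ∀ᵐ ω ∂ℙ, ∀ j : ℕ, ∀ᶠ n : ℕ in atTop,
      g n ω / n ≤ c + (2 + M) * (1 / ((j : ℝ) + 1)) :=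
    ae_all_iff.2 fun j => key _ (by positivity)
  filter_upwards [hc, hall] with ω hω hj
  refine tendsto_of_le_liminf_of_limsup_le hω.ge ?_ (h.bddAbove ω) (h.bddBelow ω)
  have hlim : Tendsto (fun j : ℕ => c + (2 + M) * (1 / ((j : ℝ) + 1))) atTop (𝓝 c) := by
    simpa using (tendsto_one_div_add_atTop_nhds_zero_nat (𝕜 := ℝ)).const_mul (2 + M)
      |>.const_add c
  exact ge_of_tendsto' hlim fun j =>
    limsup_le_of_le (h.bddBelow ω).isCoboundedUnder_le (hj j)

/-! ### Counting cylinders -/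

section Cylinders

variable {Ω : Type*} {k : ℕ} (θ : Ω → Ω) (A : Ω → Matrix (Fin k) (Fin k) ℝ)

/-- Cutting a word of length `n + m` after `n` letters is injective and yields cylinders over `ω`
and over `θⁿ ω`. -/
lemma cylCount_add_le (n m : ℕ) (ω : Ω) :
    cylCount θ A (n + m) ω ≤ cylCount θ A n ω * cylCount θ A m (θ^[n] ω) := by
  unfold cylCount
  rw [← Set.ncard_prod]
  refine Set.ncard_le_ncard_of_injOn
    (fun x => (fun i => x (Fin.castAdd m i), fun i => x (Fin.natAdd n i))) ?_ ?_ (Set.toFinite _)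
  · intro x hx
    refine ⟨fun i hi => hx i (by omega), fun i hi => ?_⟩
    have hit : θ^[i] (θ^[n] ω) = θ^[n + i] ω := by
      rw [add_comm n i, Function.iterate_add_apply]
    rw [hit]
    exact hx (n + i) (by omega)
  · intro x _ y _ hxy
    simp only [Prod.mk.injEq] at hxy
    funext i
    refine Fin.addCases (fun i => congrFun hxy.1 i) (fun i => congrFun hxy.2 i) i

lemma cylCount_le (n : ℕ) (ω : Ω) : cylCount θ A n ω ≤ k ^ n := by
  unfold cylCount
  refine (Set.ncard_le_ncard (Set.subset_univ _) (Set.toFinite _)).trans ?_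
  simp [Set.ncard_univ]

lemma measurable_cylCount [MeasurableSpace Ω] (hθ : Measurable θ)
    (hA : ∀ i j, Measurable fun ω => A ω i j) (n : ℕ) : Measurable (cylCount θ A n) := by
  classical
  have heq : cylCount θ A n = fun ω => ∑ x : Fin n → Fin k,
      if (∀ (i : ℕ) (hi : i + 1 < n),
        A (θ^[i] ω) (x ⟨i, Nat.lt_of_succ_lt hi⟩) (x ⟨i + 1, hi⟩) = 1) then 1 else 0 := by
    funext ω
    rw [← Finset.card_filter, cylCount, Set.ncard_eq_toFinset_card']
    congr 1
    ext x
    simp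
  rw [heq]
  refine Finset.measurable_sum _ fun x _ => Measurable.ite ?_ measurable_const measurable_const
  simp only [Set.ofPred_forall]
  exact MeasurableSet.iInter fun i => MeasurableSet.iInter fun hi =>
    measurableSet_eq_fun ((hA _ _).comp (hθ.iterate i)) measurable_const

lemma bddSubadd_log_cylCount [MeasurableSpace Ω] (hθ : Measurable θ)
    (hA : ∀ i j, Measurable fun ω => A ω i j) :
    BddSubadd θ (fun n ω => Real.log (cylCount θ A n ω)) (Real.log k) where
  meas n := Real.measurable_log.comp
    (measurable_from_top.comp (measurable_cylCount θ A hθ hA n))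
  nonneg n ω := Real.log_natCast_nonneg _
  le n ω := by
    rcases Nat.eq_zero_or_pos (cylCount θ A n ω) with h0 | h0
    · rw [h0]
      simpa using mul_nonneg (Nat.cast_nonneg n) (Real.log_natCast_nonneg k)
    · rw [← Real.log_pow]
      exact Real.log_le_log (by exact_mod_cast h0) (by exact_mod_cast cylCount_le θ A n ω)
  subadd n m ω := by
    -- If there is no cylinder of length `n + m`, the left side is `Real.log 0 = 0`.
    rcases Nat.eq_zero_or_pos (cylCount θ A (n + m) ω) with h0 | h0
    · rw [h0]
      simpa using add_nonneg (Real.log_natCast_nonneg (cylCount θ A n ω))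
        (Real.log_natCast_nonneg (cylCount θ A m (θ^[n] ω)))
    · have h1 := cylCount_add_le θ A n m ω
      have h2 : cylCount θ A n ω ≠ 0 := by rintro h; simp [h] at h1; omega
      have h3 : cylCount θ A m (θ^[n] ω) ≠ 0 := by rintro h; simp [h] at h1; omega
      rw [← Real.log_mul (by exact_mod_cast h2) (by exact_mod_cast h3)]
      exact Real.log_le_log (by exact_mod_cast h0) (by exact_mod_cast h1)
  M_nonneg := Real.log_natCast_nonneg k

end Cylinders

/-- If `θ` is ergodic and `A : Ω → M_{k×k}({0,1})` is a random transition
matrix, then there is a constant `h(Σ_A) ∈ ℝ ∪ {-∞}` such that for ℙ-a.e. `ω` the limit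
`lim (1/n) log |𝓒_n(ω)|` exists and equals `h(Σ_A)` (the topological entropy of the random
shift of finite type `Σ_A`). -/
theorem random_topological_entropy_exists
    {Ω : Type*} [MeasurableSpace Ω]
    (ℙ : Measure Ω) [IsProbabilityMeasure ℙ]
    (θ : Ω → Ω) (hθerg : Ergodic θ ℙ) (hθinv : Function.Bijective θ)
    (k : ℕ) (hk : 2 ≤ k)
    (A : Ω → Matrix (Fin k) (Fin k) ℝ)
    (hAmeas : ∀ i j, Measurable fun ω => A ω i j)
    (h01 : ∀ ω i j, A ω i j = 0 ∨ A ω i j = 1) :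
    ∃ c : EReal, ∀ᵐ ω ∂ℙ,
      Filter.Tendsto
        (fun n : ℕ => (((n : ℝ)⁻¹ * Real.log (cylCount θ A n ω) : ℝ) : EReal))
        Filter.atTop (𝓝 c) := by
  obtain ⟨c, hc⟩ := (bddSubadd_log_cylCount θ A hθerg.measurable hAmeas).exists_tendsto hθerg
  refine ⟨(c : EReal), ?_⟩
  filter_upwards [hc] with ω hω
  refine (continuous_coe_real_ereal.tendsto c).comp ?_
  simpa only [div_eq_inv_mul] using hω
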